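/- Let the torsion 2-form be T^a = -𝒴 k^a (k♭ ∧ l♭) + [C̃_c{}^a + (C_c - Ã_c)k^a + B δ_c^a] k♭ ∧ θ̃^c, where C̃_{ab} is antisymmetric transversal, C_c, Ã_c are transversal, and 𝒴, B are scalars. Then T^a ∧ ⋆T^b = -𝒴² k^a k^b vol, where vol is the metric volume form; in particular if 𝒴 = 0 then T^a ∧ ⋆T^b = 0 for all a, b. -/

import Mathlib

open Finset in
/-- The contraction of two decomposable 2-tensors factors into a product of bilinear pairings. -/
theorem sum_contract_mul {ι : Type*} [Fintype ι] (h : ι → ι → ℝ) (u v u' v' : ι → ℝ) :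
    ∑ x, ∑ y, ∑ x', ∑ y', h x x' * h y y' * (u x * v y) * (u' x' * v' y') =
      (∑ x, ∑ x', h x x' * u x * u' x') * ∑ y, ∑ y', h y y' * v y * v' y' := by
  rw [sum_mul_sum]
  refine sum_congr rfl fun x _ => sum_congr rfl fun y _ => ?_
  rw [sum_mul_sum]
  refine sum_congr rfl fun x' _ => sum_congr rfl fun y' _ => ?_
  ring

/-- The inner product of the 2-forms `u ∧ v` and `u' ∧ v'` as a Gram determinant. -/
theorem half_sum_contract_wedge {ι : Type*} [Fintype ι] (h : ι → ι → ℝ) (u v u' v' : ι → ℝ) :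
    (1 / 2) * ∑ x, ∑ y, ∑ x', ∑ y', h x x' * h y y' *
        (u x * v y - u y * v x) * (u' x' * v' y' - u' y' * v' x') =
      (∑ x, ∑ y, h x y * u x * u' y) * (∑ x, ∑ y, h x y * v x * v' y) -
      (∑ x, ∑ y, h x y * u x * v' y) * (∑ x, ∑ y, h x y * v x * u' y) := by
  have expand : ∀ x y x' y', h x x' * h y y' *
        (u x * v y - u y * v x) * (u' x' * v' y' - u' y' * v' x') =
      h x x' * h y y' * (u x * v y) * (u' x' * v' y') -
      h x x' * h y y' * (u x * v y) * (v' x' * u' y') -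
      h x x' * h y y' * (v x * u y) * (u' x' * v' y') +
      h x x' * h y y' * (v x * u y) * (v' x' * u' y') := fun x y x' y' => by ring
  simp only [expand, Finset.sum_add_distrib, Finset.sum_sub_distrib, sum_contract_mul]
  ring

/-- A right inverse of a symmetric matrix is symmetric. -/
theorem symm_of_symm_mul_eq_one {ι : Type*} [Fintype ι] [DecidableEq ι] (g h : ι → ι → ℝ)
    (hg : ∀ a b, g a b = g b a)
    (hgh : ∀ a b, ∑ c, g a c * h c b = if a = b then 1 else 0) (a b : ι) : h a b = h b a := by
  have hmul : Matrix.of g * Matrix.of h = 1 := by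
    ext a b
    simp [Matrix.mul_apply, Matrix.one_apply, hgh]
  have hsymm : (Matrix.of g).transpose = Matrix.of g := by
    ext a b
    exact hg b a
  have hinv : (Matrix.of g)⁻¹ = Matrix.of h := Matrix.inv_eq_right_inv hmul
  have htr : (Matrix.of h).transpose = Matrix.of h := by
    rw [← hinv, Matrix.transpose_nonsing_inv, hsymm]
  exact congrFun (congrFun htr b) a


/-- For the torsion 2-form
`T^a = -𝒴 k^a k♭∧l♭ + [C̃_c{}^a + (C_c - Ã_c)k^a + Bδ_c^a] k♭∧θ̃^c`,
one has `T^a ∧ ⋆T^b = -𝒴² k^a k^b vol`; stated via the induced inner product of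
2-forms: `⟨T^a, T^b⟩ = ½ T^a_{xy} T^{b xy} = -𝒴² k^a k^b`.  In particular if
`𝒴 = 0` then `T^a ∧ ⋆T^b = 0` for all `a`, `b`. -/
theorem stmt_17 {n : ℕ} (g ginv : Fin n → Fin n → ℝ)
    (hgs : ∀ a b, g a b = g b a)
    (hinv : ∀ a b, ∑ c, g a c * ginv c b = if a = b then 1 else 0)
    (k l : Fin n → ℝ)
    (hkk : ∑ a, ∑ b, ginv a b * k a * k b = 0)
    (hll : ∑ a, ∑ b, ginv a b * l a * l b = 0)
    (hkl : ∑ a, ∑ b, ginv a b * k a * l b = 1)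
    (kU lU : Fin n → ℝ)
    (hkU : ∀ a, kU a = ∑ b, ginv a b * k b)
    (hlU : ∀ a, lU a = ∑ b, ginv a b * l b)
    (θ : Fin n → Fin n → ℝ)                    -- transversal coframe θ̃^c
    (hθk : ∀ c, ∑ a, kU a * θ c a = 0)
    (hθl : ∀ c, ∑ a, lU a * θ c a = 0)
    (Ct : Fin n → Fin n → ℝ)                    -- C̃_c{}^a, transversal
    (hCt1 : ∀ a, ∑ c, kU c * Ct c a = 0) (hCt2 : ∀ a, ∑ c, lU c * Ct c a = 0)
    (hCt3 : ∀ c, ∑ a, k a * Ct c a = 0) (hCt4 : ∀ c, ∑ a, l a * Ct c a = 0)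
    (Cc At : Fin n → ℝ)                         -- C_c, Ã_c, transversal
    (hCc1 : ∑ c, kU c * Cc c = 0) (hCc2 : ∑ c, lU c * Cc c = 0)
    (hAt1 : ∑ c, kU c * At c = 0) (hAt2 : ∑ c, lU c * At c = 0)
    (Y B : ℝ)
    (T : Fin n → Fin n → Fin n → ℝ)
    (hT : ∀ a x y, T a x y =
      -Y * kU a * (k x * l y - k y * l x) +
      ∑ c, (Ct c a + (Cc c - At c) * kU a + B * (if c = a then 1 else 0)) *
        (k x * θ c y - k y * θ c x)) :
    (∀ a b, (1 / 2) * ∑ x, ∑ y, ∑ x', ∑ y',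
        ginv x x' * ginv y y' * T a x y * T b x' y' = -(Y ^ 2) * kU a * kU b) ∧
    (Y = 0 → ∀ a b, (1 / 2) * ∑ x, ∑ y, ∑ x', ∑ y',
        ginv x x' * ginv y y' * T a x y * T b x' y' = 0) := by
  have hsymm := symm_of_symm_mul_eq_one g ginv hgs hinv
  let M : Fin n → Fin n → ℝ := fun a c =>
    Ct c a + (Cc c - At c) * kU a + B * (if c = a then 1 else 0)
  let ω : Fin n → Fin n → ℝ := fun a y => -Y * kU a * l y + ∑ c, M a c * θ c y
  have hTω : ∀ a x y, T a x y = k x * ω a y - k y * ω a x := by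
    intro a x y
    have hsum : ∑ c, M a c * (k x * θ c y - k y * θ c x) =
        k x * ∑ c, M a c * θ c y - k y * ∑ c, M a c * θ c x := by
      rw [Finset.mul_sum, Finset.mul_sum, ← Finset.sum_sub_distrib]
      exact Finset.sum_congr rfl fun c _ => by ring
    rw [hT]
    change _ + ∑ c, M a c * (k x * θ c y - k y * θ c x) = _
    rw [hsum]
    ring
  have hlow : ∀ v : Fin n → ℝ, ∑ x, ∑ y, ginv x y * v x * k y = ∑ x, kU x * v x := by
    intro v
    refine Finset.sum_congr rfl fun x _ => ?_
    rw [hkU, Finset.sum_mul]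
    exact Finset.sum_congr rfl fun y _ => by ring
  have hswap : ∀ v : Fin n → ℝ, ∑ x, ∑ y, ginv x y * k x * v y = ∑ x, kU x * v x := by
    intro v
    rw [← hlow, Finset.sum_comm]
    refine Finset.sum_congr rfl fun x _ => Finset.sum_congr rfl fun y _ => ?_
    rw [hsymm y x]
    ring
  have hkω : ∀ a, ∑ x, kU x * ω a x = -Y * kU a := by
    intro a
    have hl : ∑ x, kU x * l x = 1 := by rw [← hswap, hkl]
    have hθ : ∑ x, kU x * ∑ c, M a c * θ c x = 0 := by
      simp_rw [Finset.mul_sum]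
      rw [Finset.sum_comm]
      refine Finset.sum_eq_zero fun c _ => ?_
      rw [← mul_zero (M a c), ← hθk c, Finset.mul_sum]
      exact Finset.sum_congr rfl fun x _ => by ring
    have hsplit : ∀ x, kU x * ω a x =
        -Y * kU a * (kU x * l x) + kU x * ∑ c, M a c * θ c x := fun x => by
      simp only [ω]
      ring
    simp only [hsplit, Finset.sum_add_distrib, ← Finset.mul_sum]
    rw [hl, hθ]
    ring
  have main : ∀ a b, (1 / 2) * ∑ x, ∑ y, ∑ x', ∑ y',
      ginv x x' * ginv y y' * T a x y * T b x' y' = -(Y ^ 2) * kU a * kU b := by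
    intro a b
    simp only [hTω]
    rw [half_sum_contract_wedge, hkk, hswap, hlow, hkω, hkω]
    ring
  refine ⟨main, fun hY a b => ?_⟩
  rw [main, hY]
  ring
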